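/- Let α ≥ 2 be even and let S be a binary matrix with pairwise distinct rows that contains the all-zero vector as a row, has no inessential column, and in which every pairwise row Hamming distance lies in {α, α+1}. Then the number of rows of weight α is at most (α+1)² − (α+1) + 1. -/

import Mathlib

/-!
The rows of weight `α = 2m` have pairwise even distance, hence distance exactly `α`, so their
supports are `2m`-sets meeting pairwise in exactly `m` points. Such a family of more than
`(m + 1) ^ 2` sets is a sunflower with a core of size `m` (a weak form of Deza's theorem,
`exists_core`):

* If a point lies in `p ≥ 1` members and is missed by `q ≥ 1` members, then `p * q ≤ m * (p + q)`
  (`degree_mul_le`). Indeed the vector `q * ∑ (members through the point) - p * ∑ (members missing it)` has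
  squared norm `m * p * q * (p + q)` and its coordinate at the point is `p * q`.
* Hence every point is light (`p ≤ m`) or heavy (`q ≤ m`). Counting incidences with a fixed member
  shows that every member has at least `m` heavy points, and there cannot be `m + 1` heavy points,
  since two members would contain all of them. So the heavy points form the core.

If there were too many rows of weight `α`, then every row of weight `α + 1` also meets each of
their supports in exactly `m` points; having too few points to meet all petals, it contains the core
and avoids the petals. A petal column is then supported on one single row, and since all distances
are at least `2`, it is inessential.
-/

/-- The support of row `i`: the set of columns where the binary matrix `S` has a 1. -/
def rowSupport {n d : ℕ} (S : Fin n → Fin d → Bool) (i : Fin n) : Finset (Fin d) :=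
  Finset.univ.filter fun c => S i c = true

/-- A column `j` of a binary matrix is inessential if (1) it exactly distinguishes
some row `i` from all other rows, and (2) the rows remain pairwise distinct after
deleting column `j`. -/
def Inessential {n d : ℕ} (S : Fin n → Fin d → Bool) (j : Fin d) : Prop :=
  (∃ i : Fin n, (∀ l, l ≠ i → S i j ≠ S l j) ∧ ∀ l l', l ≠ i → l' ≠ i → S l j = S l' j) ∧
  (∀ i i' : Fin n, i ≠ i' → ∃ c : Fin d, c ≠ j ∧ S i c ≠ S i' c)

/-- Number of members of the subfamily `A` that contain the point `c`, as an integer. -/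
def pointDegree {ι κ : Type*} [DecidableEq κ] (W : ι → Finset κ) (A : Finset ι) (c : κ) : ℤ :=
  ∑ i ∈ A, if c ∈ W i then 1 else 0

lemma pointDegree_eq_card {ι κ : Type*} [DecidableEq κ] (W : ι → Finset κ) (A : Finset ι)
    (c : κ) : pointDegree W A c = ((A.filter fun i => c ∈ W i).card : ℤ) := by
  simp [pointDegree]

lemma sum_pointDegree_mul {ι κ : Type*} [Fintype κ] [DecidableEq κ] (W : ι → Finset κ)
    (A B : Finset ι) :
    ∑ c, pointDegree W A c * pointDegree W B c = ∑ i ∈ A, ∑ j ∈ B, ((W i ∩ W j).card : ℤ) := by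
  simp only [pointDegree, Finset.sum_mul_sum]
  rw [Finset.sum_comm]
  refine Finset.sum_congr rfl fun i _ => ?_
  rw [Finset.sum_comm]
  refine Finset.sum_congr rfl fun j _ => ?_
  simp only [← ite_and, mul_ite, mul_one, mul_zero]
  rw [Finset.sum_boole]
  congr 2
  ext c
  simp [and_comm]

lemma sum_sum_inter_self {ι κ : Type*} [DecidableEq ι] [DecidableEq κ] (W : ι → Finset κ) (m : ℕ)
    (A : Finset ι) (hcard : ∀ i ∈ A, (W i).card = 2 * m)
    (hint : ∀ i ∈ A, ∀ j ∈ A, i ≠ j → (W i ∩ W j).card = m) :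
    ∑ i ∈ A, ∑ j ∈ A, ((W i ∩ W j).card : ℤ) = m * A.card * (A.card + 1) := by
  have h : ∀ i ∈ A, ∑ j ∈ A, ((W i ∩ W j).card : ℤ) = m * (A.card + 1) := by
    intro i hi
    have h2 : ∀ j ∈ A, ((W i ∩ W j).card : ℤ) = m + if i = j then (m : ℤ) else 0 := by
      intro j hj
      by_cases hij : i = j
      · subst hij
        simp [hcard i hi]
        ring
      · simp [hij, hint i hi j hj hij]
    rw [Finset.sum_congr rfl h2, Finset.sum_add_distrib]
    simp [hi]
    ring
  rw [Finset.sum_congr rfl h]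
  simp
  ring

/-- A point lying in `p` members and missed by `q` members satisfies `p * q ≤ m * (p + q)`. -/
lemma degree_mul_le {ι κ : Type*} [DecidableEq ι] [Fintype κ] [DecidableEq κ]
    (W : ι → Finset κ) (m : ℕ) (R : Finset ι) (hcard : ∀ i ∈ R, (W i).card = 2 * m)
    (hint : ∀ i ∈ R, ∀ j ∈ R, i ≠ j → (W i ∩ W j).card = m) (c : κ) :
    (R.filter fun i => c ∈ W i).card * (R.filter fun i => c ∉ W i).card ≤ m * R.card := by
  set A := R.filter fun i => c ∈ W i with hA
  set B := R.filter fun i => c ∉ W i with hB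
  have hR : A.card + B.card = R.card := Finset.card_filter_add_card_filter_not _
  have hAR : ∀ i ∈ A, i ∈ R := fun i hi => (Finset.mem_filter.1 hi).1
  have hBR : ∀ i ∈ B, i ∈ R := fun i hi => (Finset.mem_filter.1 hi).1
  have eAA := sum_sum_inter_self W m A (fun i hi => hcard i (hAR i hi))
    (fun i hi j hj => hint i (hAR i hi) j (hAR j hj))
  have eBB := sum_sum_inter_self W m B (fun i hi => hcard i (hBR i hi))
    (fun i hi j hj => hint i (hBR i hi) j (hBR j hj))
  have eAB : ∑ i ∈ A, ∑ j ∈ B, ((W i ∩ W j).card : ℤ) = A.card * B.card * m := by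
    have : ∀ i ∈ A, ∀ j ∈ B, ((W i ∩ W j).card : ℤ) = m := by
      intro i hi j hj
      have hne : i ≠ j := by
        rintro rfl
        exact (Finset.mem_filter.1 hj).2 (Finset.mem_filter.1 hi).2
      exact_mod_cast hint i (hAR i hi) j (hBR j hj) hne
    rw [Finset.sum_congr rfl fun i hi => Finset.sum_congr rfl (this i hi)]
    simp
    ring
  rw [← sum_pointDegree_mul] at eAA eBB eAB
  have hcA : pointDegree W A c = A.card := by
    rw [pointDegree_eq_card, Finset.filter_true_of_mem fun i hi => (Finset.mem_filter.1 hi).2]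
  have hcB : pointDegree W B c = 0 := by
    rw [pointDegree_eq_card, Finset.filter_false_of_mem fun i hi => (Finset.mem_filter.1 hi).2]
    simp
  set p : ℤ := (A.card : ℤ) with hp
  set q : ℤ := (B.card : ℤ) with hq
  -- the coordinate at `c` is bounded by the whole squared norm
  have h1 : (q * pointDegree W A c - p * pointDegree W B c) ^ 2 ≤
      ∑ x, (q * pointDegree W A x - p * pointDegree W B x) ^ 2 :=
    Finset.single_le_sum (f := fun x => (q * pointDegree W A x - p * pointDegree W B x) ^ 2)
      (fun x _ => sq_nonneg _) (Finset.mem_univ c)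
  have h2 : ∑ x, (q * pointDegree W A x - p * pointDegree W B x) ^ 2 =
      q ^ 2 * ∑ x, pointDegree W A x * pointDegree W A x
        + p ^ 2 * ∑ x, pointDegree W B x * pointDegree W B x
        - 2 * p * q * ∑ x, pointDegree W A x * pointDegree W B x := by
    simp only [Finset.mul_sum, ← Finset.sum_add_distrib, ← Finset.sum_sub_distrib]
    exact Finset.sum_congr rfl fun x _ => by ring
  rw [h2, eAA, eBB, eAB, hcA, hcB] at h1
  have h3 : (p * q) * (p * q) ≤ (p * q) * (m * (p + q)) := by linarith
  have h4 : p * q ≤ m * (p + q) := by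
    have hp0 : 0 ≤ p := by positivity
    have hq0 : 0 ≤ q := by positivity
    rcases (mul_nonneg hp0 hq0).eq_or_lt with h | h
    · rw [← h]
      positivity
    · exact le_of_mul_le_mul_left h3 h
  rw [← hR]
  zify
  exact h4

/-- A weak form of Deza's theorem: a family of more than `(m + 1) ^ 2` sets of size `2 * m`, any
two of which meet in exactly `m` points, has `m` points common to all its members. -/
lemma exists_core {ι κ : Type*} [DecidableEq ι] [Fintype κ] [DecidableEq κ]
    (W : ι → Finset κ) (m : ℕ) (R : Finset ι) (hcard : ∀ i ∈ R, (W i).card = 2 * m)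
    (hint : ∀ i ∈ R, ∀ j ∈ R, i ≠ j → (W i ∩ W j).card = m)
    (hR : (m + 1) ^ 2 < R.card) :
    ∃ C : Finset κ, C.card = m ∧ ∀ i ∈ R, C ⊆ W i := by
  have hsplit : ∀ c, (R.filter fun i => c ∈ W i).card + (R.filter fun i => c ∉ W i).card = R.card :=
    fun c => Finset.card_filter_add_card_filter_not _
  have hdich : ∀ c, (R.filter fun i => c ∈ W i).card ≤ m ∨
      (R.filter fun i => c ∉ W i).card ≤ m := by
    intro c
    have h1 := degree_mul_le W m R hcard hint c
    have h2 := hsplit c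
    by_contra! hcon
    obtain ⟨a, ha⟩ := Nat.exists_eq_add_of_lt hcon.1
    obtain ⟨b, hb⟩ := Nat.exists_eq_add_of_lt hcon.2
    rw [← h2] at h1 hR
    rw [ha, hb] at h1 hR
    nlinarith [Nat.zero_le (a * b)]
  set H : Finset κ := Finset.univ.filter fun c => (R.filter fun i => c ∉ W i).card ≤ m with hH
  have hHle : H.card ≤ m := by
    by_contra! hcon
    obtain ⟨K, hKH, hK⟩ := Finset.exists_subset_card_eq (show m + 1 ≤ H.card from hcon)
    -- members missing some point of `K`
    set U := K.biUnion fun c => R.filter fun i => c ∉ W i with hU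
    have hUcard : U.card ≤ (m + 1) * m := by
      rw [← hK]
      exact Finset.card_biUnion_le_card_mul _ _ _ fun c hc => (Finset.mem_filter.1 (hKH hc)).2
    have hgood : 1 < (R \ U).card := by
      have := Finset.le_card_sdiff U R
      have h2 : (m + 1) * m + 1 < R.card := by nlinarith
      omega
    obtain ⟨i, hi, j, hj, hij⟩ := Finset.one_lt_card.1 hgood
    have hsub : ∀ i ∈ R \ U, K ⊆ W i := by
      intro i hi c hc
      by_contra hci
      rw [Finset.mem_sdiff] at hi
      exact hi.2 (Finset.mem_biUnion.2 ⟨c, hc, Finset.mem_filter.2 ⟨hi.1, hci⟩⟩)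
    have := Finset.card_le_card (Finset.subset_inter (hsub i hi) (hsub j hj))
    rw [hint i (Finset.mem_sdiff.1 hi).1 j (Finset.mem_sdiff.1 hj).1 hij, hK] at this
    omega
  have hmany : ∀ i ∈ R, m ≤ (W i ∩ H).card := by
    intro i hi
    by_contra! hcon
    -- incidences of the points of `W i` with all members
    have hsum : ∑ c ∈ W i, (R.filter fun j => c ∈ W j).card = m * (R.card + 1) := by
      have e1 : ∑ c ∈ W i, (R.filter fun j => c ∈ W j).card = ∑ j ∈ R, (W i ∩ W j).card := by
        simp only [Finset.card_filter]
        rw [Finset.sum_comm]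
        refine Finset.sum_congr rfl fun j _ => ?_
        rw [← Finset.card_filter, Finset.filter_mem_eq_inter]
      rw [e1, ← Finset.add_sum_erase R _ hi, Finset.inter_self, hcard i hi,
        Finset.sum_congr rfl fun j hj => hint i hi j (Finset.mem_of_mem_erase hj)
          (Finset.ne_of_mem_erase hj).symm]
      rw [Finset.sum_const, Finset.card_erase_of_mem hi, smul_eq_mul]
      obtain ⟨r, hr⟩ : ∃ r, R.card = r + 1 := ⟨R.card - 1, by omega⟩
      rw [hr]
      simp
      ring
    have hb1 : ∑ c ∈ W i ∩ H, (R.filter fun j => c ∈ W j).card ≤ (W i ∩ H).card * R.card := by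
      rw [← smul_eq_mul]
      exact Finset.sum_le_card_nsmul _ _ _ fun c _ => Finset.card_filter_le _ _
    have hb2 : ∑ c ∈ W i \ H, (R.filter fun j => c ∈ W j).card ≤ (W i \ H).card * m := by
      rw [← smul_eq_mul]
      refine Finset.sum_le_card_nsmul _ _ _ fun c hc => ?_
      have hcH : c ∉ H := (Finset.mem_sdiff.1 hc).2
      rcases hdich c with h | h
      · exact h
      · exact absurd (Finset.mem_filter.2 ⟨Finset.mem_univ c, h⟩) hcH
    have hb3 := Finset.sum_inter_add_sum_sdiff (W i) H fun c => (R.filter fun j => c ∈ W j).card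
    have hb4 := Finset.card_inter_add_card_sdiff (W i) H
    rw [hcard i hi] at hb4
    rw [hsum] at hb3
    obtain ⟨t, ht⟩ := Nat.exists_eq_add_of_lt hcon
    have hd : (W i \ H).card = m + t + 1 := by omega
    rw [hd] at hb2
    have hm : (W i ∩ H).card * R.card + (t + 1) * R.card = m * R.card := by
      conv_rhs => rw [ht]
      ring
    have : t * (m + 1) ^ 2 ≤ t * R.card := Nat.mul_le_mul_left t hR.le
    nlinarith [Nat.zero_le (t * m ^ 2), Nat.zero_le (t * m)]
  have hsub : ∀ i ∈ R, H ⊆ W i := by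
    intro i hi
    have : W i ∩ H = H :=
      Finset.eq_of_subset_of_card_le Finset.inter_subset_right (hHle.trans (hmany i hi))
    exact Finset.inter_eq_right.1 this
  obtain ⟨i, hi⟩ : R.Nonempty := Finset.card_pos.1 (by omega)
  refine ⟨H, le_antisymm hHle ?_, hsub⟩
  exact (hmany i hi).trans (Finset.card_le_card Finset.inter_subset_right)

lemma hammingDist_rowSupport {n d : ℕ} (S : Fin n → Fin d → Bool) (i j : Fin n) :
    hammingDist (S i) (S j) + 2 * (rowSupport S i ∩ rowSupport S j).card =
      (rowSupport S i).card + (rowSupport S j).card := by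
  have h : hammingDist (S i) (S j) =
      (rowSupport S i \ rowSupport S j).card + (rowSupport S j \ rowSupport S i).card := by
    rw [← Finset.card_union_of_disjoint disjoint_sdiff_sdiff, hammingDist]
    congr 1
    ext c
    simp only [rowSupport, Finset.mem_filter, Finset.mem_univ, true_and, Finset.mem_union,
      Finset.mem_sdiff]
    cases S i c <;> cases S j c <;> simp
  have h1 := Finset.card_inter_add_card_sdiff (rowSupport S i) (rowSupport S j)
  have h2 := Finset.card_inter_add_card_sdiff (rowSupport S j) (rowSupport S i)
  rw [Finset.inter_comm] at h2
  omega

theorem stmt11 {n d : ℕ} (α : ℕ) (hα : 2 ≤ α) (heven : Even α)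
    (S : Fin n → Fin d → Bool)
    (hrows : ∀ i j : Fin n, i ≠ j → S i ≠ S j)
    (i₀ : Fin n) (hzero : ∀ c, S i₀ c = false)
    (hiness : ∀ j : Fin d, ¬ Inessential S j)
    (hham : ∀ i j : Fin n, i ≠ j →
      hammingDist (S i) (S j) = α ∨ hammingDist (S i) (S j) = α + 1) :
    (Finset.univ.filter fun i : Fin n => (rowSupport S i).card = α).card ≤
      (α + 1) ^ 2 - (α + 1) + 1 := by
  obtain ⟨m, hm⟩ := heven
  by_contra! hcon
  set R := Finset.univ.filter fun i : Fin n => (rowSupport S i).card = α with hRdef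
  have hbig : (m + 1) ^ 2 < R.card ∧ α + 1 < R.card := by
    have h1 : (α + 1) ^ 2 - (α + 1) = α ^ 2 + α := by
      have : (α + 1) ^ 2 = α ^ 2 + α + (α + 1) := by ring
      omega
    rw [h1] at hcon
    have h2 : α ^ 2 = 4 * m ^ 2 := by rw [hm]; ring
    constructor <;> nlinarith
  have hmemR : ∀ i, i ∈ R ↔ (rowSupport S i).card = α := fun i => by simp [hRdef]
  have hcard : ∀ i ∈ R, (rowSupport S i).card = 2 * m := fun i hi => by
    rw [(hmemR i).1 hi, hm, two_mul]
  have hw0 : rowSupport S i₀ = ∅ := by simp [rowSupport, hzero]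
  -- a parity argument: rows of weight `α` or `α + 1` meet those of weight `α` in `m` points
  have hmeet : ∀ i ∈ R, ∀ l, l ≠ i → l ≠ i₀ → (rowSupport S i ∩ rowSupport S l).card = m := by
    intro i hi l hl hl0
    have h1 := hammingDist_rowSupport S i l
    have h2 := hammingDist_rowSupport S l i₀
    have h3 := hcard i hi
    simp only [hw0, Finset.inter_empty, Finset.card_empty] at h2
    have h4 := hham i l hl.symm
    have h5 := hham l i₀ hl0
    omega
  have hne0 : ∀ i ∈ R, i ≠ i₀ := by
    rintro i hi rfl
    have := hcard i hi
    rw [hw0, Finset.card_empty] at this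
    omega
  obtain ⟨C, hC, hCsub⟩ := exists_core (rowSupport S) m R hcard
    (fun i hi j hj hij => hmeet i hi j hij.symm (hne0 j hj)) hbig.1
  have hinter : ∀ i ∈ R, ∀ l, l ≠ i → l ≠ i₀ → C ⊆ rowSupport S l →
      rowSupport S i ∩ rowSupport S l = C := by
    intro i hi l hl hl0 hsub
    exact (Finset.eq_of_subset_of_card_le (Finset.subset_inter (hCsub i hi) hsub)
      (by rw [hmeet i hi l hl hl0, hC])).symm
  -- a row not containing the core would meet each of the `> α + 1` disjoint petals
  have hcore : ∀ l, l ≠ i₀ → C ⊆ rowSupport S l := by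
    intro l hl0
    by_cases hlR : l ∈ R
    · exact hCsub l hlR
    by_contra hnot
    have hpick : ∀ i ∈ R, ∃ x ∈ rowSupport S l, x ∈ rowSupport S i ∧ x ∉ C := by
      intro i hi
      by_contra! hall
      have hli : l ≠ i := fun h => hlR (h ▸ hi)
      have hsub : rowSupport S i ∩ rowSupport S l ⊆ C := fun x hx =>
        hall x (Finset.mem_inter.1 hx).2 (Finset.mem_inter.1 hx).1
      have heq := Finset.eq_of_subset_of_card_le hsub (by rw [hmeet i hi l hli hl0, hC])
      exact hnot (heq ▸ Finset.inter_subset_right)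
    have : Nonempty (Fin d) := (Finset.not_subset.1 hnot).nonempty
    choose! f hf1 hf2 hf3 using hpick
    have hlcard : (rowSupport S l).card ≤ α + 1 := by
      have h2 := hammingDist_rowSupport S l i₀
      simp only [hw0, Finset.inter_empty, Finset.card_empty] at h2
      have h5 := hham l i₀ hl0
      omega
    obtain ⟨i, hi, j, hj, hij, hfij⟩ := Finset.exists_ne_map_eq_of_card_lt_of_maps_to
      (hlcard.trans_lt hbig.2) (f := f) hf1
    apply hf3 i hi
    rw [← hinter i hi j hij.symm (hne0 j hj) (hCsub j hj)]
    exact Finset.mem_inter.2 ⟨hf2 i hi, hfij ▸ hf2 j hj⟩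
  obtain ⟨i, hi⟩ : R.Nonempty := Finset.card_pos.1 (by omega)
  obtain ⟨j, hji, hjC⟩ := Finset.exists_mem_notMem_of_card_lt_card
    (show C.card < (rowSupport S i).card by rw [hC, hcard i hi]; omega)
  have hij : S i j = true := by simpa [rowSupport] using hji
  have hlj : ∀ l, l ≠ i → S l j = false := by
    intro l hl
    by_cases hl0 : l = i₀
    · rw [hl0, hzero]
    by_contra hjl
    apply hjC
    rw [← hinter i hi l hl hl0 (hcore l hl0)]
    exact Finset.mem_inter.2 ⟨hji, by simpa [rowSupport] using hjl⟩
  refine hiness j ⟨⟨i, fun l hl => ?_, fun l l' hl hl' => ?_⟩, fun a b hab => ?_⟩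
  · simp [hij, hlj l hl]
  · rw [hlj l hl, hlj l' hl']
  · have hdist := hham a b hab
    -- distinct rows differ in at least two columns
    have h2 : 1 < (Finset.univ.filter fun c => S a c ≠ S b c).card := by
      have : hammingDist (S a) (S b) = (Finset.univ.filter fun c => S a c ≠ S b c).card := rfl
      omega
    obtain ⟨c, hc, hcj⟩ := Finset.exists_mem_ne h2 j
    exact ⟨c, hcj, (Finset.mem_filter.1 hc).2⟩
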